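/- Let (g,[p]) be an almost classical semisimple restricted Lie algebra over k. Then the derived subalgebra [g,g] is a classical semisimple p-ideal of g, and V([g,g]) = V(g). -/

import Mathlib

noncomputable section

namespace ElemAb

variable (p : ℕ) (k : Type) [Field k]

/-- The algebra of polynomial functions on a `k`-vector space `V`: the subalgebra of
`V → k` generated by the linear functionals. -/
def polyFuns (V : Type) [AddCommGroup V] [Module k V] : Subalgebra k (V → k) :=
  Algebra.adjoin k {f : V → k | ∃ φ : V →ₗ[k] k, f = ⇑φ}

/-- The Zariski topology on a `k`-vector space: the topology generated by the complements of
zero sets of polynomial functions. -/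
def zar (V : Type) [AddCommGroup V] [Module k V] : TopologicalSpace V :=
  TopologicalSpace.generateFrom {U | ∃ f ∈ polyFuns k V, U = {x | f x ≠ 0}}

variable (L : Type) [LieRing L] [LieAlgebra k L]

/-- A restricted Lie algebra structure (`p`-map) on the Lie algebra `L`:  a map
`x ↦ x^[p]` having the formal properties of a `p`-th power map, namely
`(t • x)^[p] = t^p • x^[p]`, additivity on commuting elements (and, in general, additivity up
to a correction term lying in the subalgebra generated by the two elements), and
`ad (x^[p]) = (ad x)^p`. -/
structure pStructure : Type where
  pmap : L → L
  pmap_smul : ∀ (t : k) (x : L), pmap (t • x) = t ^ p • pmap x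
  pmap_add_of_comm : ∀ x y : L, ⁅x, y⁆ = 0 → pmap (x + y) = pmap x + pmap y
  pmap_add_mem : ∀ x y : L, pmap (x + y) - pmap x - pmap y ∈ LieSubalgebra.lieSpan k L {x, y}
  ad_pmap : ∀ x y : L, ⁅pmap x, y⁆ = ((LieAlgebra.ad k L x) ^ p) y

variable {p k L}

/-- The (restricted) nullcone `V(g) = {x | x^[p] = 0}`. -/
def pStructure.null (P : pStructure p k L) : Set L := {x | P.pmap x = 0}

/-- A submodule is an elementary abelian subalgebra if it is abelian (hence a subalgebra) and
the `p`-map vanishes on it. -/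
def pStructure.IsElemAbelian (P : pStructure p k L) (e : Submodule k L) : Prop :=
  (∀ x ∈ e, ∀ y ∈ e, ⁅x, y⁆ = (0 : L)) ∧ ∀ x ∈ e, P.pmap x = 0

/-- `E(r, g)`: the `r`-dimensional elementary abelian subalgebras contained in the carrier
set `g` (take `g = Set.univ` for the whole algebra), as a set of submodules. -/
def pStructure.elemSet (P : pStructure p k L) (g : Set L) (r : ℕ) : Set (Submodule k L) :=
  {e | (e : Set L) ⊆ g ∧ Module.finrank k ↥e = r ∧ P.IsElemAbelian e}

/-- Pairs of linearly independent vectors spanning a member of a given collection `C` of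
two-dimensional subspaces. -/
def planePairs (C : Set (Submodule k L)) : Set (L × L) :=
  {z | LinearIndependent k ![z.1, z.2] ∧ Submodule.span k (Set.range ![z.1, z.2]) ∈ C}

/-- The canonical (quotient) map from spanning pairs to planes. -/
def planeMk (C : Set (Submodule k L)) (z : planePairs C) : ↥C :=
  ⟨Submodule.span k (Set.range ![z.val.1, z.val.2]), z.prop.2⟩

/-- The Zariski topology on a collection of two-dimensional subspaces (e.g. `E(2,g)` or
`Gr₂(g)^{V(g)}`), defined as the quotient topology induced from the Zariski topology on the
variety of spanning pairs. -/
def planeTop (C : Set (Submodule k L)) : TopologicalSpace ↥C :=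
  TopologicalSpace.coinduced (planeMk C)
    (TopologicalSpace.induced Subtype.val (zar k (L × L)))

/-- The statement that the projective variety `E(2, g)` is connected (the empty space counts
as connected). -/
def pStructure.EIsConnected (P : pStructure p k L) (g : Set L) : Prop :=
  @IsPreconnected ↥(P.elemSet g 2) (planeTop (P.elemSet g 2)) Set.univ

/-- `N_i(g) = {x | (ad x)^i = 0}`. -/
def Ncal (i : ℕ) : Set L := {x | (LieAlgebra.ad k L x) ^ i = 0}

/-- The truncated exponential `exp x = ∑_{i<p} (ad x)^i / i!`. -/
def expAd (x : L) : Module.End k L :=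
  ∑ i ∈ Finset.range p, (i.factorial : k)⁻¹ • ((LieAlgebra.ad k L x) ^ i)

/-- Automorphisms of the Lie algebra `L` (as linear endomorphisms). -/
def IsLieAut (f : Module.End k L) : Prop :=
  Function.Bijective f ∧ ∀ x y : L, f ⁅x, y⁆ = ⁅f x, f y⁆

/-- Automorphisms of the restricted Lie algebra `(L, [p])`, i.e. automorphisms commuting with
the `p`-map (the group `Aut_p(g)`). -/
def pStructure.IspAut (P : pStructure p k L) (f : Module.End k L) : Prop :=
  IsLieAut f ∧ ∀ x : L, f (P.pmap x) = P.pmap (f x)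

/-- A restricted Lie algebra is admissible if `N₃(g) ⊆ V(g)` and `exp(N₃(g)) ⊆ Aut_p(g)`. -/
def pStructure.IsAdmissible (P : pStructure p k L) : Prop :=
  Ncal (k := k) 3 ⊆ P.null ∧ ∀ x ∈ Ncal (k := k) (L := L) 3, P.IspAut (expAd (p := p) x)


section Classical

variable (k L) [FiniteDimensional k L]

/-- The root space (eigenspace of the adjoint action) of a subalgebra `H` for the linear
form `α` on `H`. -/
def rootSp (H : LieSubalgebra k L) (α : Module.Dual k ↥H) : Submodule k L where
  carrier := {x | ∀ h : ↥H, ⁅(h : L), x⁆ = α h • x}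
  add_mem' := by
    intro a b ha hb h
    rw [lie_add, ha h, hb h, smul_add]
  zero_mem' := by intro h; simp
  smul_mem' := by
    intro c x hx h
    rw [lie_smul, hx h, smul_comm]

/-- Seligman's axiomatic characterization of the classical (semi-)simple Lie algebras in
characteristic `p ≥ 3`:  trivial center, perfectness, and the existence of an abelian Cartan
subalgebra `H` giving a root space decomposition with one-dimensional root spaces
`g_α` (`α ≠ 0`), with `[g_α, g_{-α}]` one-dimensional and with proper root strings. -/
def IsClassicalLie : Prop :=
  LieAlgebra.center k L = ⊥ ∧
  ⁅(⊤ : LieIdeal k L), (⊤ : LieIdeal k L)⁆ = ⊤ ∧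
  ∃ H : LieSubalgebra k L, H.IsCartanSubalgebra ∧ IsLieAbelian ↥H ∧
    (⨆ α : Module.Dual k ↥H, rootSp k L H α) = ⊤ ∧
    (∀ α : Module.Dual k ↥H, α ≠ 0 → rootSp k L H α ≠ ⊥ →
      Module.finrank k ↥(rootSp k L H α) = 1) ∧
    (∀ α : Module.Dual k ↥H, α ≠ 0 → rootSp k L H α ≠ ⊥ →
      Module.finrank k ↥(Submodule.span k
        {z : L | ∃ x ∈ rootSp k L H α, ∃ y ∈ rootSp k L H (-α), ⁅x, y⁆ = z}) = 1) ∧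
    (∀ α : Module.Dual k ↥H, α ≠ 0 → rootSp k L H α ≠ ⊥ →
      ∀ β : Module.Dual k ↥H, rootSp k L H β ≠ ⊥ →
        ∃ n : ℕ, rootSp k L H (β + n • α) = ⊥)

/-- A Lie algebra is classical semisimple if it is the direct sum of ideals each of which is
a simple Lie algebra of classical type. -/
def IsClassicalSemisimple : Prop :=
  ∃ (ι : Type) (_ : Fintype ι) (I : ι → LieIdeal k L),
    (∀ i, LieAlgebra.IsSimple k ↥(I i) ∧ IsClassicalLie k ↥(I i)) ∧
    iSupIndep I ∧ iSup I = ⊤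

end Classical

/-- `g` is almost classical semisimple: there is a classical semisimple Lie algebra `M`
with `ad M ⊆ g ⊆ Der M`, i.e. `g` embeds into the derivation algebra of `M` with image
containing all inner derivations. -/
def IsAlmostClassicalSemisimple (k L : Type) [Field k] [LieRing L] [LieAlgebra k L] : Prop :=
  ∃ (M : Type) (_ : LieRing M) (_ : LieAlgebra k M) (_ : FiniteDimensional k M),
    IsClassicalSemisimple k M ∧
    ∃ φ : L →ₗ⁅k⁆ LieDerivation k M M,
      Function.Injective φ ∧ ∀ m : M, LieDerivation.ad k M m ∈ Set.range φ

end ElemAb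

open ElemAb

/-!
Let `H` be a Cartan subalgebra of a classical Lie algebra `M` and `D` a derivation. Since `H` acts
diagonally on `M`, the components of `D` shifting the root spaces are inner, so `D` is inner up to
a derivation `T` that vanishes on `H`, and `T` multiplies each root space by a scalar. Two such
`T` commute; hence commutators of derivations are inner, and `[g, g]` is the algebra of inner
derivations of `M` whenever `ad M ⊆ g ⊆ Der M`.

Modulo inner derivations the `p`-th power is additive, by Jacobson's formula, and it sends inner
derivations to inner ones, since the root vectors and `H` do. So if `D ^ p = 0`, then `T ^ p` is
inner, say `T ^ p = ad z` with `z ∈ H`, and the scalar of `T` on the root space of `γ` is a `p`-th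
root of `γ z`. Integrality of `γ` on the coroots (root strings) shows that `γ ↦ (γ z) ^ (1 / p)` is
evaluation at some `h ∈ H`; so `T = ad h` is inner too.
-/

namespace ElemAb

attribute [local instance] LieRing.ofAssociativeRing

section Jacobson

open Polynomial Finset

variable {A : Type*} [Ring A] {p : ℕ}

theorem cast_choose_prime_sub_one (hp : p.Prime) (hA : (p : A) = 0) {m : ℕ} (hm : m < p) :
    ((p - 1).choose m : A) = (-1) ^ m := by
  induction m with
  | zero => simp
  | succ m ih =>
    have hpascal := Nat.choose_succ_succ (p - 1) m
    obtain ⟨c, hc⟩ := hp.dvd_choose_self m.succ_ne_zero hm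
    rw [Nat.succ_eq_add_one, Nat.sub_add_cancel hp.one_le, hc] at hpascal
    have hsum : ((p - 1).choose m : A) + (p - 1).choose (m + 1) = 0 := by
      rw [← Nat.cast_add, ← hpascal, Nat.cast_mul, hA, zero_mul]
    rw [eq_neg_of_add_eq_zero_right hsum, ih (by omega), pow_succ, mul_neg_one]

theorem sub_pow_prime_sub_one (hp : p.Prime) (hA : (p : A) = 0) {x y : A} (hxy : Commute x y) :
    (x - y) ^ (p - 1) = ∑ i ∈ range p, x ^ i * y ^ (p - 1 - i) := by
  have hsign : ((-1) ^ (p - 1) : A) = 1 := by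
    simpa using (cast_choose_prime_sub_one hp hA (Nat.sub_one_lt hp.ne_zero)).symm
  rw [sub_eq_add_neg, hxy.neg_right.add_pow, Nat.sub_add_cancel hp.one_le]
  refine sum_congr rfl fun i hi => ?_
  have hip := mem_range.1 hi
  rw [cast_choose_prime_sub_one hp hA hip, neg_pow y, mul_assoc, mul_assoc,
    ← ((Commute.neg_one_left (y ^ (p - 1 - i))).pow_left i).eq, ← mul_assoc ((-1) ^ _), ← pow_add,
    Nat.sub_add_cancel (by omega), hsign, one_mul]

theorem derivative_pow_eq_sum (g : A[X]) (n : ℕ) :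
    derivative (g ^ n) = ∑ i ∈ range n, g ^ i * derivative g * g ^ (n - 1 - i) := by
  induction n with
  | zero => simp
  | succ n ih =>
    rw [pow_succ, derivative_mul, ih, sum_range_succ, sum_mul]
    congr 1
    · refine sum_congr rfl fun i hi => ?_
      rw [mul_assoc, ← pow_succ, show n - 1 - i + 1 = n + 1 - 1 - i by grind]
    · simp

theorem derivative_pow_prime (hp : p.Prime) (hA : (p : A) = 0) (g : A[X]) :
    derivative (g ^ p) = (LieAlgebra.ad ℤ A[X] g ^ (p - 1)) (derivative g) := by
  have hEnd : (p : Module.End ℤ A[X]) = 0 := by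
    ext q : 1
    simp [← C_eq_natCast, hA, Module.End.natCast_apply, nsmul_eq_mul]
  have hcomm : Commute (LinearMap.mulLeft ℤ g) (LinearMap.mulRight ℤ g) :=
    LinearMap.commute_mulLeft_right g g
  rw [LieAlgebra.ad_eq_lmul_left_sub_lmul_right, Pi.sub_apply,
    sub_pow_prime_sub_one hp hEnd hcomm, LinearMap.sum_apply, derivative_pow_eq_sum]
  exact sum_congr rfl fun i _ => by simp [LinearMap.pow_mulLeft, LinearMap.pow_mulRight, mul_assoc]

variable {J : AddSubgroup A} {a b : A}

theorem coeff_lie_mem (ha : ∀ c ∈ J, ⁅a, c⁆ ∈ J) (hb : ∀ c ∈ J, ⁅b, c⁆ ∈ J) {q : A[X]}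
    (hq : ∀ i, q.coeff i ∈ J) (i : ℕ) : ⁅C a * X + C b, q⁆.coeff i ∈ J := by
  have hlie : ⁅C a * X + C b, q⁆ = (C a * q - q * C a) * X + (C b * q - q * C b) := by
    simp only [Ring.lie_def, add_mul, mul_add, sub_mul, mul_assoc, X_mul]
    abel
  rw [hlie, coeff_add]
  refine J.add_mem ?_ (by simpa [Ring.lie_def] using hb _ (hq i))
  cases i with
  | zero => simp
  | succ i => simpa [Ring.lie_def] using ha _ (hq i)

theorem mem_of_nsmul_mem (hp : p.Prime) (hA : (p : A) = 0) {n : ℕ} (hn : 0 < n) (hnp : n < p)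
    {c : A} (hc : n • c ∈ J) : c ∈ J := by
  have hcop : n.gcd p = 1 := (Nat.coprime_of_lt_prime hn.ne' hnp hp).symm
  have hbezout := congrArg (· • c) (Nat.gcd_eq_gcd_ab n p)
  simp only [hcop, Nat.cast_one, one_smul, add_smul, mul_comm (n : ℤ), mul_smul, mul_comm (p : ℤ),
    natCast_zsmul, nsmul_eq_mul (p : ℕ) c, hA, zero_mul, smul_zero, add_zero] at hbezout
  exact hbezout ▸ J.zsmul_mem hc _

theorem coeff_pow_prime_mem (hp : p.Prime) (hA : (p : A) = 0) (hba : ⁅b, a⁆ ∈ J)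
    (ha : ∀ c ∈ J, ⁅a, c⁆ ∈ J) (hb : ∀ c ∈ J, ⁅b, c⁆ ∈ J) {i : ℕ} (hi : 0 < i) (hip : i < p) :
    ((C a * X + C b) ^ p).coeff i ∈ J := by
  have hiter (n j : ℕ) : ((LieAlgebra.ad ℤ A[X] (C a * X + C b) ^ (n + 1)) (C a)).coeff j ∈ J := by
    induction n generalizing j with
    | zero =>
      have hC : ⁅C a * X + C b, C a⁆ = C ⁅b, a⁆ := by
        simp [Ring.lie_def, add_mul, mul_add, mul_assoc, X_mul_C]
      rw [zero_add, pow_one, LieAlgebra.ad_apply, hC, coeff_C]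
      split_ifs
      exacts [hba, J.zero_mem]
    | succ n ih =>
      rw [pow_succ', Module.End.mul_apply]
      exact coeff_lie_mem ha hb ih j
  have hder : (derivative ((C a * X + C b) ^ p)).coeff (i - 1) ∈ J := by
    rw [derivative_pow_prime hp hA, show p - 1 = p - 2 + 1 by have := hp.two_le; omega]
    simpa using hiter (p - 2) (i - 1)
  refine mem_of_nsmul_mem hp hA hi hip ?_
  rw [coeff_derivative, ← Nat.cast_add_one, Nat.sub_add_cancel hi] at hder
  rwa [nsmul_eq_mul, Nat.cast_comm]

/-- Jacobson's formula for `(a + b) ^ p`, modulo `J`. -/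
theorem add_pow_prime_sub_mem (hp : p.Prime) (hA : (p : A) = 0) (hba : ⁅b, a⁆ ∈ J)
    (ha : ∀ c ∈ J, ⁅a, c⁆ ∈ J) (hb : ∀ c ∈ J, ⁅b, c⁆ ∈ J) :
    (a + b) ^ p - a ^ p - b ^ p ∈ J := by
  have hdeg : (C a * X + C b).natDegree ≤ 1 := by compute_degree
  have heval : (a + b) ^ p = ∑ i ∈ range (p + 1), ((C a * X + C b) ^ p).coeff i := by
    let ev : A[X] →+* A := eval₂RingHom' (RingHom.id A) 1 fun _ => Commute.one_right _
    have hev : ev (C a * X + C b) = a + b := by simp [ev]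
    rw [← hev, ← map_pow]
    change eval₂ (RingHom.id A) 1 _ = _
    rw [eval₂_eq_sum_range' _ (n := p + 1)
      (by have := natDegree_pow_le_of_le p hdeg; omega)]
    simp
  have htop : ((C a * X + C b) ^ p).coeff p = a ^ p := by
    simpa using coeff_pow_of_natDegree_le (m := p) hdeg
  have hbot : ((C a * X + C b) ^ p).coeff 0 = b ^ p := by
    rw [← constantCoeff_apply, map_pow]
    simp
  rw [heval, sum_range_succ, htop, add_sub_cancel_right, range_eq_Ico,
    sum_eq_sum_Ico_succ_bot hp.pos, hbot, add_sub_cancel_left]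
  refine J.sum_mem fun i hi => ?_
  have hi := mem_Ico.1 hi
  exact coeff_pow_prime_mem hp hA hba ha hb (by omega) hi.2

end Jacobson

section RootSpaces

variable {k L : Type} [Field k] [LieRing L] [LieAlgebra k L] {H : LieSubalgebra k L}
  {α β : Module.Dual k H} {x y : L}

theorem lie_mem_rootSp (hx : x ∈ rootSp k L H α) (hy : y ∈ rootSp k L H β) :
    ⁅x, y⁆ ∈ rootSp k L H (α + β) := by
  intro h
  rw [leibniz_lie, hx h, hy h, smul_lie, lie_smul, LinearMap.add_apply, add_smul]

theorem ad_pow_mem_rootSp (hx : x ∈ rootSp k L H α) (hy : y ∈ rootSp k L H β) (n : ℕ) :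
    ((LieAlgebra.ad k L x) ^ n) y ∈ rootSp k L H (β + n • α) := by
  induction n with
  | zero => simpa using hy
  | succ n ih =>
    rw [pow_succ', Module.End.mul_apply, LieAlgebra.ad_apply, succ_nsmul', add_left_comm]
    exact lie_mem_rootSp hx ih

variable [IsLieAbelian H]

theorem lie_eq_zero_of_mem_of_mem (hx : x ∈ H) (hy : y ∈ H) : ⁅x, y⁆ = 0 := by
  simpa using congrArg Subtype.val (trivial_lie_zero H H ⟨x, hx⟩ ⟨y, hy⟩)

theorem mem_rootSp_zero [H.IsCartanSubalgebra] : x ∈ rootSp k L H 0 ↔ x ∈ H := by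
  constructor
  · intro hx
    rw [← LieSubalgebra.IsCartanSubalgebra.self_normalizing (H := H),
      LieSubalgebra.mem_normalizer_iff']
    intro y hy
    have hyx : ⁅y, x⁆ = 0 := by simpa using hx ⟨y, hy⟩
    exact hyx ▸ H.zero_mem
  · intro hx h
    simpa using lie_eq_zero_of_mem_of_mem h.2 hx

theorem iSupIndep_rootSp : iSupIndep (rootSp k L H) := by
  have hindep := Module.End.independent_iInf_maxGenEigenspace_of_forall_mapsTo
    (fun h : H => LieAlgebra.ad k L (h : L)) fun i j φ => by
      refine Module.End.mapsTo_maxGenEigenspace_of_comm ?_ φ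
      rw [commute_iff_lie_eq, ← LieHom.map_lie, lie_eq_zero_of_mem_of_mem j.2 i.2, map_zero]
  refine (hindep.comp (f := fun α : Module.Dual k H => (α : H → k)) DFunLike.coe_injective).mono
    fun α x hx => ?_
  simp only [Function.comp_apply, Submodule.mem_iInf]
  refine fun h => (Module.End.mem_maxGenEigenspace _ _ _).2 ⟨1, ?_⟩
  simp [hx h]

end RootSpaces

section RootStrings

variable {k L : Type} [Field k] [LieRing L] [LieAlgebra k L] {H : LieSubalgebra k L}
  {α β : Module.Dual k H} {x y : L} {p : ℕ} [CharP k p]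

/-- The sum of the root spaces along the `α`-string through `β`, which is cyclic of period `p`. -/
def rootString (H : LieSubalgebra k L) (p : ℕ) (α β : Module.Dual k H) : Submodule k L :=
  ⨆ i ∈ Finset.range p, rootSp k L H (β + i • α)

theorem char_nsmul_eq_zero (α : Module.Dual k H) : p • α = 0 := by
  rw [← Nat.cast_smul_eq_nsmul k, CharP.cast_eq_zero, zero_smul]

theorem add_mod_nsmul_eq (n : ℕ) : β + (n % p) • α = β + n • α := by
  conv_rhs =>
    rw [← Nat.mod_add_div n p, add_smul, mul_smul, char_nsmul_eq_zero ((n / p) • α), add_zero]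

theorem rootSp_le_rootString (hp : p.Prime) (α β : Module.Dual k H) (n : ℕ) :
    rootSp k L H (β + n • α) ≤ rootString H p α β := by
  rw [← add_mod_nsmul_eq (p := p) n]
  exact le_biSup (fun i => rootSp k L H (β + i • α)) (Finset.mem_range.2 (Nat.mod_lt n hp.pos))

theorem lie_mem_rootString (hp : p.Prime) {n : ℕ} (hx : x ∈ rootSp k L H (n • α)) :
    ∀ z ∈ rootString H p α β, ⁅x, z⁆ ∈ rootString H p α β := by
  suffices rootString H p α β ≤ (rootString H p α β).comap (LieAlgebra.ad k L x) from this
  refine iSup₂_le fun i _ z hz => rootSp_le_rootString hp α β (n + i) ?_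
  rw [add_smul, add_left_comm]
  exact lie_mem_rootSp hx hz

theorem trace_restrict_ad_eq_zero {W : Submodule k L} (hx : ∀ z ∈ W, ⁅x, z⁆ ∈ W)
    (hy : ∀ z ∈ W, ⁅y, z⁆ ∈ W) {w : L} (hxy : ⁅x, y⁆ = w)
    (hw : ∀ z ∈ W, LieAlgebra.ad k L w z ∈ W) :
    LinearMap.trace k W ((LieAlgebra.ad k L w).restrict hw) = 0 := by
  subst hxy
  have hcomm : (LieAlgebra.ad k L ⁅x, y⁆).restrict hw =
      (LieAlgebra.ad k L x).restrict (p := W) (q := W) hx *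
          (LieAlgebra.ad k L y).restrict (p := W) (q := W) hy -
        (LieAlgebra.ad k L y).restrict (p := W) (q := W) hy *
          (LieAlgebra.ad k L x).restrict (p := W) (q := W) hx := by
    ext z
    exact lie_lie x y (z : L)
  rw [hcomm, map_sub, LinearMap.trace_mul_comm, sub_self]

theorem trace_restrict_rootSp [FiniteDimensional k L] {h : H}
    (hmaps : ∀ z ∈ rootSp k L H α, LieAlgebra.ad k L (h : L) z ∈ rootSp k L H α) :
    LinearMap.trace k _ ((LieAlgebra.ad k L (h : L)).restrict hmaps) =
      Module.finrank k (rootSp k L H α) * α h := by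
  have hscalar : (LieAlgebra.ad k L (h : L)).restrict hmaps = α h • LinearMap.id := by
    ext ⟨x, hx⟩
    exact hx h
  rw [hscalar, map_smul, LinearMap.trace_id, smul_eq_mul, mul_comm]

variable [IsLieAbelian H]

theorem iSupIndep_rootSp_add_nsmul (hα : α ≠ 0) :
    iSupIndep fun i : Finset.range p => rootSp k L H (β + (i : ℕ) • α) := by
  refine iSupIndep_rootSp.comp (f := fun i : Finset.range p => β + (i : ℕ) • α) fun i j hij => ?_
  have hcast : ((i : ℕ) : k) = (j : ℕ) := by
    refine smul_left_injective k hα ?_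
    simpa only [Nat.cast_smul_eq_nsmul] using add_left_cancel hij
  exact Subtype.ext ((CharP.natCast_injOn_Iio k p) (Finset.mem_range.1 i.2)
    (Finset.mem_range.1 j.2) hcast)

theorem sum_finrank_rootSp_mul_eq_zero [FiniteDimensional k L] (hp : p.Prime) (hα : α ≠ 0)
    (hx : x ∈ rootSp k L H α) (hy : y ∈ rootSp k L H (-α)) {h : H} (hxy : ⁅x, y⁆ = h) :
    ∑ i ∈ Finset.range p, (Module.finrank k (rootSp k L H (β + i • α)) : k) * (β + i • α) h
      = 0 := by
  have hneg : -α = (p - 1) • α := by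
    rw [neg_eq_iff_add_eq_zero, ← succ_nsmul', Nat.sub_add_cancel hp.one_le, char_nsmul_eq_zero]
  have hX := lie_mem_rootString (α := α) (β := β) hp (n := 1) (by rwa [one_smul])
  have hY := lie_mem_rootString (α := α) (β := β) hp (hneg ▸ hy)
  have hroot (i : ℕ) : ∀ z ∈ rootSp k L H (β + i • α),
      LieAlgebra.ad k L (h : L) z ∈ rootSp k L H (β + i • α) := fun z hz => by
    rw [LieAlgebra.ad_apply, hz h]
    exact Submodule.smul_mem _ _ hz
  have hstring : ∀ z ∈ rootString H p α β, LieAlgebra.ad k L (h : L) z ∈ rootString H p α β :=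
    fun z hz => by
      rw [← hxy, LieAlgebra.ad_apply, lie_lie]
      exact sub_mem (hX _ (hY z hz)) (hY _ (hX z hz))
  have htrace := trace_restrict_ad_eq_zero hX hY hxy hstring
  rw [LinearMap.trace_eq_sum_trace_restrict_of_eq_biSup _ (iSupIndep_rootSp_add_nsmul hα) hroot
      (rootString H p α β) rfl hstring] at htrace
  simpa only [trace_restrict_rootSp] using htrace

end RootStrings

section AdjointAndPerfect

variable {R L : Type*} [CommRing R] [LieRing L] [LieAlgebra R L]

theorem ad_injective (hcenter : LieAlgebra.center R L = ⊥) :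
    Function.Injective (LieAlgebra.ad R L) := by
  rw [← LieHom.ker_eq_bot, LieAlgebra.ad_ker_eq_self_module_ker,
    LieAlgebra.self_module_ker_eq_center, hcenter]

theorem span_lie_eq_top (hperfect : ⁅(⊤ : LieIdeal R L), (⊤ : LieIdeal R L)⁆ = ⊤) :
    Submodule.span R {z : L | ∃ x y : L, ⁅x, y⁆ = z} = ⊤ := by
  have hspan := LieSubmodule.lieIdeal_oper_eq_linear_span' (⊤ : LieIdeal R L) (⊤ : LieIdeal R L)
  rw [hperfect] at hspan
  simpa using hspan.symm

end AdjointAndPerfect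

/-- A Cartan subalgebra witnessing that a Lie algebra is of classical type in the sense of
`IsClassicalLie`. -/
class IsClassicalCartan {k L : Type} [Field k] [LieRing L] [LieAlgebra k L]
    (H : LieSubalgebra k L) : Prop extends H.IsCartanSubalgebra, IsLieAbelian H where
  center_eq_bot : LieAlgebra.center k L = ⊥
  lie_top_top : ⁅(⊤ : LieIdeal k L), (⊤ : LieIdeal k L)⁆ = ⊤
  iSup_rootSp : ⨆ α, rootSp k L H α = ⊤
  finrank_rootSp : ∀ α : Module.Dual k H, α ≠ 0 → rootSp k L H α ≠ ⊥ →
    Module.finrank k (rootSp k L H α) = 1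
  exists_rootSp_eq_bot : ∀ α : Module.Dual k H, α ≠ 0 → rootSp k L H α ≠ ⊥ →
    ∀ β : Module.Dual k H, rootSp k L H β ≠ ⊥ → ∃ n : ℕ, rootSp k L H (β + n • α) = ⊥

section ClassicalCartan

variable {k L : Type} [Field k] [LieRing L] [LieAlgebra k L]

variable (H : LieSubalgebra k L) [IsClassicalCartan H]

open IsClassicalCartan

theorem mem_of_forall_rootSp_le {S : Submodule k L} (hS : ∀ α, rootSp k L H α ≤ S) (x : L) :
    x ∈ S :=
  iSup_le hS (iSup_rootSp (H := H) ▸ Submodule.mem_top)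

theorem ext_rootSp {f g : Module.End k L} (hfg : ∀ α, ∀ x ∈ rootSp k L H α, f x = g x) :
    f = g :=
  LinearMap.ext (mem_of_forall_rootSp_le H (S := LinearMap.eqLocus f g) hfg)

theorem eq_zero_of_forall_root {h : H}
    (hroot : ∀ α : Module.Dual k H, rootSp k L H α ≠ ⊥ → α h = 0) : (h : L) = 0 := by
  refine ad_injective (center_eq_bot H) ((ext_rootSp H fun α x hx => ?_).trans (map_zero _).symm)
  rcases eq_or_ne (rootSp k L H α) ⊥ with hα | hα
  · rw [(Submodule.eq_bot_iff _).1 hα x hx, map_zero, map_zero]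
  · rw [LieAlgebra.ad_apply, hx h, hroot α hα, zero_smul, LinearMap.zero_apply]

open Classical in
theorem isInternal_rootSp : DirectSum.IsInternal (rootSp k L H) :=
  (DirectSum.isInternal_submodule_iff_iSupIndep_and_iSup_eq_top _).2
    ⟨iSupIndep_rootSp, iSup_rootSp⟩

open Classical in
/-- The projection of `L` onto the root space `L_α` along the other root spaces. -/
def rootProj (α : Module.Dual k H) : Module.End k L :=
  (rootSp k L H α).subtype ∘ₗ DirectSum.component k _ (fun β => rootSp k L H β) α ∘ₗ
    (LinearEquiv.ofBijective (DirectSum.coeLinearMap (rootSp k L H))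
      (isInternal_rootSp H)).symm.toLinearMap

variable {H} {α β : Module.Dual k H} {x y : L}

theorem rootProj_mem (α : Module.Dual k H) (x : L) : rootProj H α x ∈ rootSp k L H α :=
  Subtype.property _

theorem rootProj_of_mem (hx : x ∈ rootSp k L H α) : rootProj H α x = x := by
  classical
  exact congrArg Subtype.val ((isInternal_rootSp H).ofBijective_coeLinearMap_of_mem hx)

theorem rootProj_of_mem_ne (hx : x ∈ rootSp k L H β) (hβ : β ≠ α) : rootProj H α x = 0 := by
  classical
  exact congrArg Subtype.val ((isInternal_rootSp H).ofBijective_coeLinearMap_of_mem_ne hβ hx)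

theorem rootProj_lie (α : Module.Dual k H) (h : H) (x : L) :
    rootProj H α ⁅(h : L), x⁆ = α h • rootProj H α x := by
  suffices rootProj H α * LieAlgebra.ad k L (h : L) = α h • rootProj H α from
    LinearMap.congr_fun this x
  refine ext_rootSp H fun β y hy => ?_
  rw [Module.End.mul_apply, LieAlgebra.ad_apply, hy h, map_smul, LinearMap.smul_apply]
  rcases eq_or_ne β α with rfl | hβ
  · rfl
  · rw [rootProj_of_mem_ne hy hβ, smul_zero, smul_zero]

theorem finite_setOf_rootSp_ne_bot [FiniteDimensional k L] :
    {α : Module.Dual k H | rootSp k L H α ≠ ⊥}.Finite :=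
  WellFoundedGT.finite_ne_bot_of_iSupIndep iSupIndep_rootSp

theorem sum_rootProj [FiniteDimensional k L] (x : L) :
    ∑ α ∈ (finite_setOf_rootSp_ne_bot (H := H)).toFinset, rootProj H α x = x := by
  suffices ∑ α ∈ (finite_setOf_rootSp_ne_bot (H := H)).toFinset, rootProj H α = LinearMap.id by
    rw [← LinearMap.sum_apply, this, LinearMap.id_apply]
  refine ext_rootSp H fun β y hy => ?_
  rw [LinearMap.sum_apply, Finset.sum_eq_single β (fun α _ hα => rootProj_of_mem_ne hy hα.symm),
    rootProj_of_mem hy, LinearMap.id_apply]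
  intro hβ
  have hβ' : rootSp k L H β = ⊥ := by simpa using hβ
  rw [rootProj_of_mem hy, (Submodule.eq_bot_iff _).1 hβ' y hy]

theorem exists_forall_rootProj_eq [FiniteDimensional k L] (y : Module.Dual k H → L) :
    ∃ x, ∀ α, rootProj H α x = rootProj H α (y α) := by
  refine ⟨∑ β ∈ (finite_setOf_rootSp_ne_bot (H := H)).toFinset, rootProj H β (y β), fun α => ?_⟩
  rw [map_sum, Finset.sum_eq_single α
    (fun β _ hβ => rootProj_of_mem_ne (rootProj_mem β _) hβ), rootProj_of_mem (rootProj_mem α _)]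
  intro hα
  have hbot : rootSp k L H α = ⊥ := by simpa using hα
  rw [rootProj_of_mem (rootProj_mem α _), (Submodule.eq_bot_iff _).1 hbot _ (rootProj_mem α _)]

theorem mem_of_rootProj_eq_zero [FiniteDimensional k L]
    (hx : ∀ α : Module.Dual k H, α ≠ 0 → rootProj H α x = 0) : x ∈ H := by
  rw [← mem_rootSp_zero, ← sum_rootProj (H := H) x]
  refine Submodule.sum_mem _ fun α _ => ?_
  rcases eq_or_ne α 0 with rfl | hα
  · exact rootProj_mem 0 x
  · rw [hx α hα]
    exact Submodule.zero_mem _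

theorem lie_mem_of_mem_of_mem_neg (hx : x ∈ rootSp k L H α) (hy : y ∈ rootSp k L H (-α)) :
    ⁅x, y⁆ ∈ H := by
  rw [← mem_rootSp_zero, ← add_neg_cancel α]
  exact lie_mem_rootSp hx hy

theorem eq_top_of_rootSp_le {S : Submodule k L} (hroot : ∀ α ≠ 0, rootSp k L H α ≤ S)
    (hlie : ∀ α ≠ 0, ∀ x ∈ rootSp k L H α, ∀ y ∈ rootSp k L H (-α), ⁅x, y⁆ ∈ S) : S = ⊤ := by
  have hmem : ∀ α, ∀ x ∈ rootSp k L H α, ∀ β, ∀ y ∈ rootSp k L H β, ⁅x, y⁆ ∈ S := by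
    intro α x hx β y hy
    rcases ne_or_eq (α + β) 0 with hαβ | hαβ
    · exact hroot _ hαβ (lie_mem_rootSp hx hy)
    obtain rfl : β = -α := (neg_eq_of_add_eq_zero_right hαβ).symm
    rcases ne_or_eq α 0 with hα | rfl
    · exact hlie α hα x hx y hy
    · rw [neg_zero] at hy
      rw [lie_eq_zero_of_mem_of_mem (mem_rootSp_zero.1 hx) (mem_rootSp_zero.1 hy)]
      exact S.zero_mem
  rw [eq_top_iff, ← span_lie_eq_top (R := k) (L := L) (lie_top_top H), Submodule.span_le]
  rintro _ ⟨x, y, rfl⟩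
  refine mem_of_forall_rootSp_le H (S := S.comap (LieAlgebra.ad k L x)) (fun β y hy => ?_) y
  rw [Submodule.mem_comap, LieAlgebra.ad_apply, ← lie_skew]
  refine S.neg_mem
    (mem_of_forall_rootSp_le H (S := S.comap (LieAlgebra.ad k L y)) (fun α x hx => ?_) x)
  rw [Submodule.mem_comap, LieAlgebra.ad_apply, ← lie_skew]
  exact S.neg_mem (hmem α x hx β y hy)

theorem span_lie_rootSp_eq_top (H : LieSubalgebra k L) [IsClassicalCartan H] :
    Submodule.span k {h : H | ∃ α : Module.Dual k H, α ≠ 0 ∧ ∃ x ∈ rootSp k L H α,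
      ∃ y ∈ rootSp k L H (-α), ⁅x, y⁆ = h} = ⊤ := by
  set B := {h : H | ∃ α : Module.Dual k H, α ≠ 0 ∧ ∃ x ∈ rootSp k L H α,
    ∃ y ∈ rootSp k L H (-α), ⁅x, y⁆ = h}
  have htop : ((Submodule.span k B).map H.toSubmodule.subtype).comap (rootProj H 0) = ⊤ := by
    refine eq_top_of_rootSp_le (H := H) (fun α hα x hx => ?_) fun α hα x hx y hy => ?_
    · rw [Submodule.mem_comap, rootProj_of_mem_ne hx hα]
      exact zero_mem _
    · have hxy := lie_mem_of_mem_of_mem_neg hx hy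
      rw [Submodule.mem_comap, rootProj_of_mem (mem_rootSp_zero.2 hxy)]
      exact ⟨⟨_, hxy⟩, Submodule.subset_span ⟨α, hα, x, hx, y, hy, rfl⟩, rfl⟩
  refine Submodule.eq_top_iff'.2 fun z => ?_
  have hz : (z : L) ∈ _ := htop ▸ Submodule.mem_top
  rw [Submodule.mem_comap, rootProj_of_mem (mem_rootSp_zero.2 z.2)] at hz
  obtain ⟨z', hz', hzz'⟩ := hz
  rwa [← Subtype.ext hzz']

end ClassicalCartan

section Integrality

open IsClassicalCartan

variable {k L : Type} [Field k] [LieRing L] [LieAlgebra k L] {H : LieSubalgebra k L}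
  [IsClassicalCartan H] {α β : Module.Dual k H} {x y : L} {p : ℕ} [CharP k p]

theorem exists_natCast_eq_neg_div (hp : p.Prime) (m n : ℕ) :
    ∃ q : ℕ, (q : k) = -m / n := by
  have := Fact.mk hp
  refine ⟨(-m / n : ZMod p).val, ?_⟩
  rw [ZMod.natCast_val, ← ZMod.castHom_apply (n := p) (h := dvd_rfl) (R := k), map_div₀, map_neg,
    map_natCast, map_natCast]

theorem finrank_rootSp_le_one (hα : α ≠ 0) : Module.finrank k (rootSp k L H α) ≤ 1 := by
  rcases eq_or_ne (rootSp k L H α) ⊥ with hbot | hbot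
  · rw [hbot, finrank_bot]
    exact zero_le_one
  · exact (finrank_rootSp α hα hbot).le

theorem exists_lt_rootSp_add_nsmul_eq_bot (hp : p.Prime) (hα : α ≠ 0)
    (hαroot : rootSp k L H α ≠ ⊥) (hβroot : rootSp k L H β ≠ ⊥) :
    ∃ n < p, rootSp k L H (β + n • α) = ⊥ := by
  obtain ⟨n, hn⟩ := exists_rootSp_eq_bot α hα hαroot β hβroot
  exact ⟨n % p, Nat.mod_lt n hp.pos, by rwa [add_mod_nsmul_eq]⟩

theorem sum_finrank_rootSp_ne_zero (hp : p.Prime) (hα : α ≠ 0) (hαroot : rootSp k L H α ≠ ⊥)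
    (hβroot : rootSp k L H β ≠ ⊥) (hstring : ∀ i : ℕ, β + i • α ≠ 0) :
    ((∑ i ∈ Finset.range p, Module.finrank k (rootSp k L H (β + i • α)) : ℕ) : k) ≠ 0 := by
  obtain ⟨n, hnp, hn⟩ := exists_lt_rootSp_add_nsmul_eq_bot hp hα hαroot hβroot
  rw [Ne, CharP.cast_eq_zero_iff k p]
  refine Nat.not_dvd_of_pos_of_lt ?_ ?_
  · refine Finset.sum_pos' (fun _ _ => Nat.zero_le _) ⟨0, Finset.mem_range.2 hp.pos, ?_⟩
    have hβ : β ≠ 0 := by simpa using hstring 0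
    rw [zero_smul, add_zero, finrank_rootSp β hβ hβroot]
    exact one_pos
  · calc
      _ < ∑ _i ∈ Finset.range p, 1 :=
        Finset.sum_lt_sum (fun i _ => finrank_rootSp_le_one (hstring i))
          ⟨n, Finset.mem_range.2 hnp, by rw [hn, finrank_bot]; exact one_pos⟩
      _ = p := by simp

theorem exists_natCast_mul_eq [FiniteDimensional k L] (hp : p.Prime) (hα : α ≠ 0)
    (hβroot : rootSp k L H β ≠ ⊥) (hx : x ∈ rootSp k L H α) (hy : y ∈ rootSp k L H (-α)) {h : H}
    (hxy : ⁅x, y⁆ = h) : ∃ q : ℕ, β h = q * α h := by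
  suffices ∃ m n : ℕ, (n : k) ≠ 0 ∧ n * β h + m * α h = 0 by
    obtain ⟨m, n, hn, hmn⟩ := this
    obtain ⟨q, hq⟩ := exists_natCast_eq_neg_div (k := k) hp m n
    refine ⟨q, ?_⟩
    rw [hq]
    field_simp
    linear_combination hmn
  by_cases hstring : ∃ i : ℕ, β + i • α = 0
  · obtain ⟨i, hi⟩ := hstring
    exact ⟨i, 1, by simp, by simpa using LinearMap.congr_fun hi h⟩
  push Not at hstring
  rcases eq_or_ne (rootSp k L H α) ⊥ with hαroot | hαroot
  · have hh : h = 0 := Subtype.ext <| by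
      rw [← hxy, (Submodule.eq_bot_iff _).1 hαroot x hx, zero_lie, ZeroMemClass.coe_zero]
    exact ⟨0, 1, by simp, by simp [hh]⟩
  refine ⟨∑ i ∈ Finset.range p, Module.finrank k (rootSp k L H (β + i • α)) * i, _,
    sum_finrank_rootSp_ne_zero hp hα hαroot hβroot hstring, ?_⟩
  rw [← sum_finrank_rootSp_mul_eq_zero (β := β) hp hα hx hy hxy]
  simp only [Nat.cast_sum, Nat.cast_mul, Finset.sum_mul, ← Finset.sum_add_distrib,
    LinearMap.add_apply, LinearMap.smul_apply, nsmul_eq_mul, mul_add, mul_assoc]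

theorem ad_pow_char_eq_zero (hp : p.Prime) (hα : α ≠ 0) (hx : x ∈ rootSp k L H α) :
    LieAlgebra.ad k L x ^ p = 0 := by
  rcases eq_or_ne x 0 with rfl | hx0
  · rw [map_zero, zero_pow hp.ne_zero]
  refine ext_rootSp H fun β y hy => ?_
  rcases eq_or_ne y 0 with rfl | hy0
  · rw [map_zero, map_zero]
  obtain ⟨n, hnp, hn⟩ := exists_lt_rootSp_add_nsmul_eq_bot hp hα
    (Submodule.ne_bot_iff _ |>.2 ⟨x, hx, hx0⟩) (Submodule.ne_bot_iff _ |>.2 ⟨y, hy, hy0⟩)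
  have hzero := ad_pow_mem_rootSp hx hy n
  rw [hn, Submodule.mem_bot] at hzero
  rw [← Nat.sub_add_cancel hnp.le, pow_add, Module.End.mul_apply, hzero, map_zero,
    LinearMap.zero_apply]

end Integrality

section Derivations

theorem pow_apply_of_apply_eq_smul {R M : Type*} [CommRing R] [AddCommGroup M] [Module R M]
    {f : Module.End R M} {c : R} {x : M} (hx : f x = c • x) (n : ℕ) :
    (f ^ n) x = c ^ n • x := by
  induction n with
  | zero => simp only [pow_zero, Module.End.one_apply, one_smul]
  | succ n ih => rw [pow_succ, Module.End.mul_apply, hx, map_smul, ih, smul_smul, pow_succ']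

variable {R L : Type*} [CommRing R] [LieRing L] [LieAlgebra R L]

theorem coe_mem_range_ad_iff {D : LieDerivation R L L} :
    (D : Module.End R L) ∈ (LieAlgebra.ad R L).range ↔ D ∈ (LieDerivation.ad R L).range := by
  refine exists_congr fun m => ⟨fun hm => LieDerivation.ext fun x => ?_, ?_⟩
  · exact (LieDerivation.ad_apply_apply R L m x).trans (LinearMap.congr_fun hm x)
  · rintro rfl
    exact (LieDerivation.coe_ad_apply_eq_ad_apply m).symm

theorem lie_mem_range_ad_of_mem (D : LieDerivation R L L) {f : Module.End R L}
    (hf : f ∈ (LieAlgebra.ad R L).range) :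
    ⁅(D : Module.End R L), f⁆ ∈ (LieAlgebra.ad R L).range := by
  obtain ⟨m, rfl⟩ := hf
  refine ⟨D m, ?_⟩
  ext x
  change ⁅D m, x⁆ = D ⁅m, x⁆ - ⁅m, D x⁆
  rw [D.apply_lie_eq_add, add_sub_cancel_left]

theorem ad_add_pow_sub_mem_range {p : ℕ} [CharP R p] (hp : p.Prime) (m : L)
    (D : LieDerivation R L L) :
    (LieAlgebra.ad R L m + (D : Module.End R L)) ^ p - LieAlgebra.ad R L m ^ p -
      (D : Module.End R L) ^ p ∈ (LieAlgebra.ad R L).range := by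
  have hchar : (p : Module.End R L) = 0 := by
    rw [← map_natCast (algebraMap R (Module.End R L)), CharP.cast_eq_zero, map_zero]
  exact add_pow_prime_sub_mem (J := (LieAlgebra.ad R L).range.toSubmodule.toAddSubgroup) hp hchar
    (lie_mem_range_ad_of_mem D ⟨m, rfl⟩) (fun _ hc => LieSubalgebra.lie_mem _ ⟨m, rfl⟩ hc)
    fun _ hc => lie_mem_range_ad_of_mem D hc

end Derivations

section DerivationsOfClassical

open IsClassicalCartan

variable {k L : Type} [Field k] [LieRing L] [LieAlgebra k L]

variable {H : LieSubalgebra k L} [IsClassicalCartan H] {D T T' : LieDerivation k L L}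

theorem apply_eq_zero_of_mapsTo (hD : ∀ h ∈ H, D h ∈ H) : ∀ h ∈ H, D h = 0 := by
  intro h hh
  refine eq_zero_of_forall_root H (h := ⟨D h, hD h hh⟩) fun α hα => ?_
  obtain ⟨x, hx, hx0⟩ := Submodule.exists_mem_ne_zero_of_ne_bot hα
  have hlie := congrArg (rootProj H α) (D.apply_lie_eq_add h x)
  rw [hx ⟨h, hh⟩, map_smul, map_smul, map_add, rootProj_lie α ⟨h, hh⟩, hx ⟨D h, hD h hh⟩,
    map_smul, rootProj_of_mem hx, left_eq_add] at hlie
  exact (smul_eq_zero.1 hlie).resolve_right hx0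

theorem smul_rootProj_apply_comm (D : LieDerivation k L L) (α : Module.Dual k H) (h h' : H) :
    α h • rootProj H α (D h') = α h' • rootProj H α (D h) := by
  have hlie := congrArg (rootProj H α) (D.apply_lie_eq_sub (h : L) (h' : L))
  rw [lie_eq_zero_of_mem_of_mem h.2 h'.2, map_zero, map_zero, map_sub, rootProj_lie,
    rootProj_lie] at hlie
  exact sub_eq_zero.1 hlie.symm

theorem exists_ad_add_eq [FiniteDimensional k L] (H : LieSubalgebra k L) [IsClassicalCartan H]
    (D : LieDerivation k L L) :
    ∃ (m : L) (T : LieDerivation k L L), (∀ h ∈ H, T h = 0) ∧ D = LieDerivation.ad k L m + T := by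
  have hcoroot (α : Module.Dual k H) : ∃ h : H, α ≠ 0 → α h = 1 := by
    rcases eq_or_ne α 0 with hα | hα
    · exact ⟨0, fun h => absurd hα h⟩
    · obtain ⟨h, hh⟩ := LinearMap.surjective hα 1
      exact ⟨h, fun _ => hh⟩
  choose e he using hcoroot
  obtain ⟨m, hm⟩ := exists_forall_rootProj_eq fun α => -D (e α)
  refine ⟨m, D - LieDerivation.ad k L m, apply_eq_zero_of_mapsTo fun h hh => ?_,
    (add_sub_cancel _ _).symm⟩
  refine mem_of_rootProj_eq_zero fun α hα => ?_
  have hcomm := smul_rootProj_apply_comm D α ⟨h, hh⟩ (e α)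
  rw [LieDerivation.sub_apply, LieDerivation.ad_apply_apply, ← lie_skew, sub_neg_eq_add, map_add,
    rootProj_lie α ⟨h, hh⟩, hm, map_neg, smul_neg, hcomm, he α hα, one_smul, add_neg_cancel]

theorem exists_eq_smul_of_forall_mem (hT : ∀ h ∈ H, T h = 0) (α : Module.Dual k H) :
    ∃ c : k, ∀ x ∈ rootSp k L H α, T x = c • x := by
  have hmaps : ∀ x ∈ rootSp k L H α, T x ∈ rootSp k L H α := fun x hx h => by
    have hlie := T.apply_lie_eq_add (h : L) x
    rw [hx h, map_smul, hT h h.2, zero_lie, add_zero] at hlie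
    exact hlie.symm
  rcases eq_or_ne α 0 with rfl | hα
  · exact ⟨0, fun x hx => by rw [hT x (mem_rootSp_zero.1 hx), zero_smul]⟩
  rcases eq_or_ne (rootSp k L H α) ⊥ with hbot | hbot
  · exact ⟨0, fun x hx => by rw [(Submodule.eq_bot_iff _).1 hbot x hx, map_zero, smul_zero]⟩
  obtain ⟨v, -, hv⟩ := finrank_eq_one_iff'.1 (finrank_rootSp α hα hbot)
  obtain ⟨c, hc⟩ := hv ⟨T v, hmaps v v.2⟩
  refine ⟨c, fun x hx => ?_⟩
  obtain ⟨d, hd⟩ := hv ⟨x, hx⟩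
  have hx' : d • (v : L) = x := congrArg Subtype.val hd
  have hTv : c • (v : L) = T v := congrArg Subtype.val hc
  rw [← hx', map_smul, ← hTv, smul_comm]

theorem lie_eq_zero_of_forall_mem (hT : ∀ h ∈ H, T h = 0) (hT' : ∀ h ∈ H, T' h = 0) :
    ⁅T, T'⁆ = 0 := by
  suffices ((⁅T, T'⁆ : LieDerivation k L L) : Module.End k L) = 0 from
    LieDerivation.ext fun x => LinearMap.congr_fun this x
  refine ext_rootSp H fun α x hx => ?_
  obtain ⟨c, hc⟩ := exists_eq_smul_of_forall_mem hT α
  obtain ⟨c', hc'⟩ := exists_eq_smul_of_forall_mem hT' α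
  rw [LieDerivation.coeFn_coe, LieDerivation.lie_apply, hc x hx, hc' x hx, map_smul, map_smul,
    hc x hx, hc' x hx, smul_comm, sub_self, LinearMap.zero_apply]

theorem lie_mem_range_ad_of_isClassicalCartan [FiniteDimensional k L] (H : LieSubalgebra k L)
    [IsClassicalCartan H] (D E : LieDerivation k L L) : ⁅D, E⁆ ∈ (LieDerivation.ad k L).range := by
  obtain ⟨m, T, hT, rfl⟩ := exists_ad_add_eq H D
  obtain ⟨n, S, hS, rfl⟩ := exists_ad_add_eq H E
  refine ⟨⁅m, n⁆ - S m + T n, ?_⟩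
  change LieDerivation.ad k L (⁅m, n⁆ - S m + T n) = _
  rw [lie_add, add_lie, add_lie, lie_eq_zero_of_forall_mem hT hS, ← lie_skew _ S,
    LieDerivation.lie_der_ad_eq_ad_der, LieDerivation.lie_der_ad_eq_ad_der,
    LieDerivation.lie_der_ad_eq_ad_der, LieDerivation.ad_apply_apply, map_add, map_sub]
  abel

end DerivationsOfClassical

section PPower

open IsClassicalCartan

theorem exists_frobenius_leftInverse (k : Type) [Field k] {p : ℕ} [CharP k p] (hp : p.Prime) :
    ∃ σ : k →+ k, ∀ c, σ (c ^ p) = c := by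
  have := Fact.mk hp
  let _ := ZMod.algebra k p
  obtain ⟨σ, hσ⟩ := LinearMap.exists_leftInverse_of_injective
    ((frobenius k p).toAddMonoidHom.toZModLinearMap p)
    (LinearMap.ker_eq_bot.2 (frobenius_inj k p))
  exact ⟨σ.toAddMonoidHom, fun c => LinearMap.congr_fun hσ c⟩

variable {k L : Type} [Field k] [LieRing L] [LieAlgebra k L] [FiniteDimensional k L]
  {H : LieSubalgebra k L} [IsClassicalCartan H] {α : Module.Dual k H} {x y : L} {p : ℕ}
  [CharP k p]

theorem ad_lie_pow_char (hp : p.Prime) (hα : α ≠ 0) (hx : x ∈ rootSp k L H α)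
    (hy : y ∈ rootSp k L H (-α)) {h : H} (hxy : ⁅x, y⁆ = h) :
    LieAlgebra.ad k L (h : L) ^ p = LieAlgebra.ad k L (α h ^ (p - 1) • (h : L)) := by
  have := Fact.mk hp
  refine ext_rootSp H fun β z hz => ?_
  rcases eq_or_ne (rootSp k L H β) ⊥ with hβ | hβ
  · rw [(Submodule.eq_bot_iff _).1 hβ z hz, map_zero, map_zero]
  obtain ⟨q, hq⟩ := exists_natCast_mul_eq hp hα hβ hx hy hxy
  have hqp : (q : k) ^ p = q := by rw [← frobenius_def, map_natCast]
  rw [pow_apply_of_apply_eq_smul (hz h), map_smul, LinearMap.smul_apply,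
    LieAlgebra.ad_apply, hz h, smul_smul, hq, mul_pow, hqp, mul_left_comm,
    pow_sub_one_mul hp.ne_zero]

theorem ad_pow_char_mem_range (hp : p.Prime) (H : LieSubalgebra k L) [IsClassicalCartan H]
    (x : L) : LieAlgebra.ad k L x ^ p ∈ (LieAlgebra.ad k L).range := by
  let S : Submodule k L :=
    { carrier := {x | LieAlgebra.ad k L x ^ p ∈ (LieAlgebra.ad k L).range}
      zero_mem' := by
        rw [Set.mem_ofPred_eq, map_zero, zero_pow hp.ne_zero]
        exact zero_mem _
      add_mem' := fun {a b} ha hb => by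
        have hab := ad_add_pow_sub_mem_range hp a (LieDerivation.ad k L b)
        rw [LieDerivation.coe_ad_apply_eq_ad_apply, ← map_add] at hab
        simpa only [Set.mem_ofPred_eq, sub_add_cancel] using add_mem (add_mem hab hb) ha
      smul_mem' := fun c a ha => by
        simpa only [Set.mem_ofPred_eq, map_smul, smul_pow] using
          (LieAlgebra.ad k L).range.smul_mem (c ^ p) ha }
  suffices hS : S = ⊤ from (hS ▸ Submodule.mem_top : x ∈ S)
  refine eq_top_of_rootSp_le (H := H) (fun α hα x hx => ?_) fun α hα x hx y hy => ?_
  · change LieAlgebra.ad k L x ^ p ∈ (LieAlgebra.ad k L).range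
    rw [ad_pow_char_eq_zero hp hα hx]
    exact zero_mem _
  · exact ⟨_, (ad_lie_pow_char hp hα hx hy (h := ⟨_, lie_mem_of_mem_of_mem_neg hx hy⟩) rfl).symm⟩

theorem exists_forall_root_apply_eq (hp : p.Prime) (σ : k →+ k) (z : H) :
    ∃ h : H, ∀ γ : Module.Dual k H, rootSp k L H γ ≠ ⊥ → γ h = σ (γ z) := by
  -- Quantifying over `c` makes the statement stable under the scalar multiplications of the span.
  suffices ∀ c : k, ∃ h : H, ∀ γ : Module.Dual k H, rootSp k L H γ ≠ ⊥ → γ h = σ (c * γ z) by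
    simpa only [one_mul] using this 1
  have hz : z ∈ Submodule.span k _ := span_lie_rootSp_eq_top H ▸ Submodule.mem_top
  induction hz using Submodule.span_induction with
  | zero => exact fun c => ⟨0, fun γ _ => by simp only [map_zero, mul_zero]⟩
  | add z w _ _ hz hw =>
    intro c
    obtain ⟨h, hh⟩ := hz c
    obtain ⟨h', hh'⟩ := hw c
    exact ⟨h + h', fun γ hγ => by rw [map_add, hh γ hγ, hh' γ hγ, ← map_add, ← mul_add, map_add]⟩
  | smul a z _ hz =>
    intro c
    obtain ⟨h, hh⟩ := hz (c * a)
    exact ⟨h, fun γ hγ => by rw [hh γ hγ, map_smul, smul_eq_mul, mul_assoc]⟩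
  | mem z hz =>
    obtain ⟨α, hα, x, hx, y, hy, hxy⟩ := hz
    refine fun c => ⟨(σ (c * α z) / α z) • z, fun γ hγ => ?_⟩
    obtain ⟨q, hq⟩ := exists_natCast_mul_eq hp hα hγ hx hy hxy
    rw [map_smul, smul_eq_mul, hq, mul_left_comm c, ← nsmul_eq_mul, ← nsmul_eq_mul, map_nsmul,
      mul_smul_comm]
    rcases eq_or_ne (α z) 0 with h0 | h0
    · simp only [h0, mul_zero, map_zero]
    · rw [div_mul_cancel₀ _ h0]

theorem mem_range_ad_of_pow_mem_range_ad (hp : p.Prime) {T : LieDerivation k L L}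
    (hT : ∀ h ∈ H, T h = 0) (hTp : (T : Module.End k L) ^ p ∈ (LieAlgebra.ad k L).range) :
    (T : Module.End k L) ∈ (LieAlgebra.ad k L).range := by
  obtain ⟨z, hz⟩ := hTp
  have hzp (x : L) : ⁅z, x⁆ = ((T : Module.End k L) ^ p) x := LinearMap.congr_fun hz x
  have hzH : z ∈ H := by
    rw [← mem_rootSp_zero]
    intro h
    rw [← lie_skew, hzp, ← pow_sub_one_mul hp.ne_zero, Module.End.mul_apply,
      LieDerivation.coeFn_coe, hT h h.2, map_zero, neg_zero, LinearMap.zero_apply, zero_smul]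
  obtain ⟨σ, hσ⟩ := exists_frobenius_leftInverse k hp
  obtain ⟨h, hh⟩ := exists_forall_root_apply_eq hp σ ⟨z, hzH⟩
  refine ⟨h, ext_rootSp H fun γ x hx => ?_⟩
  rcases eq_or_ne x 0 with rfl | hx0
  · exact (map_zero _).trans (map_zero _).symm
  obtain ⟨c, hc⟩ := exists_eq_smul_of_forall_mem hT γ
  have hγz : γ ⟨z, hzH⟩ = c ^ p := by
    refine smul_left_injective k hx0 ?_
    change γ ⟨z, hzH⟩ • x = c ^ p • x
    rw [← pow_apply_of_apply_eq_smul (f := (T : Module.End k L)) (hc x hx), ← hzp]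
    exact (hx ⟨z, hzH⟩).symm
  change ⁅(h : L), x⁆ = T x
  rw [hx h, hh γ ((Submodule.ne_bot_iff _).2 ⟨x, hx, hx0⟩), hγz, hσ, hc x hx]

theorem mem_range_ad_of_pow_char_eq_zero (hp : p.Prime) (H : LieSubalgebra k L)
    [IsClassicalCartan H] {D : LieDerivation k L L} (hD : (D : Module.End k L) ^ p = 0) :
    (D : Module.End k L) ∈ (LieAlgebra.ad k L).range := by
  obtain ⟨m, T, hT, rfl⟩ := exists_ad_add_eq H D
  rw [LieDerivation.coe_add_linearMap, LieDerivation.coe_ad_apply_eq_ad_apply] at hD ⊢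
  have hjac := ad_add_pow_sub_mem_range hp m T
  rw [hD, zero_sub, ← neg_add', neg_mem_iff] at hjac
  refine add_mem ⟨m, rfl⟩ (mem_range_ad_of_pow_mem_range_ad hp hT ?_)
  exact (add_mem_cancel_left (ad_pow_char_mem_range hp H m)).1 hjac

end PPower

section IdealSums

variable {R L ι : Type*} [CommRing R] [LieRing L] [LieAlgebra R L]

theorem apply_mem_of_perfect (D : LieDerivation R L L) {I : LieIdeal R L}
    (hI : ⁅(⊤ : LieIdeal R I), (⊤ : LieIdeal R I)⁆ = ⊤) : ∀ x ∈ I, D x ∈ I := by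
  have hle : (⊤ : Submodule R I) ≤
      I.toSubmodule.comap ((D : Module.End R L) ∘ₗ I.toSubmodule.subtype) := by
    rw [← span_lie_eq_top hI, Submodule.span_le]
    rintro _ ⟨a, b, rfl⟩
    change D ⁅(a : L), (b : L)⁆ ∈ I
    rw [D.apply_lie_eq_add]
    exact I.add_mem (lie_mem_left R L I _ _ a.2) (lie_mem_right R L I _ _ b.2)
  exact fun x hx => hle (Submodule.mem_top : (⟨x, hx⟩ : I) ∈ ⊤)

/-- The restriction of a derivation to an invariant ideal. -/
def restrictDer (D : LieDerivation R L L) (I : LieIdeal R L) (h : ∀ x ∈ I, D x ∈ I) :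
    LieDerivation R I I where
  toLinearMap := (D : Module.End R L).restrict h
  leibniz' a b := Subtype.ext (D.apply_lie_eq_sub a b)

variable {I : ι → LieIdeal R L}

theorem lie_eq_zero_of_iSupIndep (hind : iSupIndep I) {i j : ι} (hij : i ≠ j) {x y : L}
    (hx : x ∈ I i) (hy : y ∈ I j) : ⁅x, y⁆ = 0 := by
  simpa using (hind.pairwiseDisjoint hij).le_bot
    ⟨lie_mem_left R L (I i) x y hx, lie_mem_right R L (I j) x y hy⟩

theorem exists_sum_of_iSup_eq_top [Fintype ι] (htop : iSup I = ⊤) (x : L) :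
    ∃ z : ∀ i, I i, ∑ i, (z i : L) = x := by
  have hx : x ∈ ⨆ i, (I i).toSubmodule := by
    rw [← LieSubmodule.iSup_toSubmodule, htop]
    exact LieSubmodule.mem_top x
  obtain ⟨f, hf, rfl⟩ := (Submodule.mem_iSup_iff_exists_finsupp _ _).1 hx
  exact ⟨fun i => ⟨f i, hf i⟩, (Finsupp.sum_fintype f (fun _ y => y) fun _ => rfl).symm⟩

theorem sum_lie_of_iSupIndep [Fintype ι] (hind : iSupIndep I) (z : ∀ i, I i) {i : ι} (y : I i) :
    ⁅∑ j, (z j : L), (y : L)⁆ = ⁅(z i : L), (y : L)⁆ := by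
  rw [sum_lie, Finset.sum_eq_single i]
  · exact fun j _ hj => lie_eq_zero_of_iSupIndep hind hj (z j).2 y.2
  · exact fun h => absurd (Finset.mem_univ i) h

theorem mem_range_ad_of_forall [Finite ι] (hind : iSupIndep I) (htop : iSup I = ⊤)
    {f : Module.End R L}
    (hf : ∀ i, ∃ m : I i, ∀ y : I i, ⁅(m : L), (y : L)⁆ = f y) :
    f ∈ (LieAlgebra.ad R L).range := by
  cases nonempty_fintype ι
  choose m hm using hf
  refine ⟨∑ i, (m i : L), LinearMap.ext fun x => ?_⟩
  obtain ⟨z, rfl⟩ := exists_sum_of_iSup_eq_top htop x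
  change ⁅_, _⁆ = _
  rw [lie_sum, map_sum]
  exact Finset.sum_congr rfl fun i _ => by rw [sum_lie_of_iSupIndep hind, hm]

end IdealSums

section ClassicalSemisimple

variable {p : ℕ} {k L : Type} [Field k] [LieRing L] [LieAlgebra k L]

theorem IsClassicalLie.exists_isClassicalCartan (h : IsClassicalLie k L) :
    ∃ H : LieSubalgebra k L, IsClassicalCartan H := by
  obtain ⟨hcenter, hperfect, H, hcartan, hab, hsup, hfinrank, -, hstring⟩ := h
  exact ⟨H, ⟨hcenter, hperfect, hsup, hfinrank, hstring⟩⟩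

namespace IsClassicalSemisimple

theorem center_eq_bot (hL : IsClassicalSemisimple k L) : LieAlgebra.center k L = ⊥ := by
  obtain ⟨ι, _, I, hI, hind, htop⟩ := hL
  refine (LieSubmodule.eq_bot_iff _).2 fun x hx => ?_
  obtain ⟨z, rfl⟩ := exists_sum_of_iSup_eq_top htop x
  refine Finset.sum_eq_zero fun i _ => ?_
  suffices z i = 0 by rw [this, LieSubmodule.coe_zero]
  refine ad_injective (hI i).2.1 (LinearMap.ext fun y => Subtype.ext ?_)
  change ⁅(z i : L), (y : L)⁆ = ((⁅(0 : I i), y⁆ : I i) : L)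
  rw [← sum_lie_of_iSupIndep hind, ← lie_skew, hx, neg_zero, zero_lie, LieSubmodule.coe_zero]

theorem lie_top_top (hL : IsClassicalSemisimple k L) :
    ⁅(⊤ : LieIdeal k L), (⊤ : LieIdeal k L)⁆ = ⊤ := by
  obtain ⟨ι, _, I, hI, -, htop⟩ := hL
  refine eq_top_iff.2 (htop.ge.trans (iSup_le fun i x hx => ?_))
  have hle : (⊤ : Submodule k (I i)) ≤ Submodule.comap (I i).toSubmodule.subtype
      ⁅(⊤ : LieIdeal k L), (⊤ : LieIdeal k L)⁆.toSubmodule := by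
    rw [← span_lie_eq_top (hI i).2.2.1, Submodule.span_le]
    rintro _ ⟨x, y, rfl⟩
    exact LieSubmodule.lie_mem_lie (LieSubmodule.mem_top (x : L)) (LieSubmodule.mem_top (y : L))
  exact hle (Submodule.mem_top : (⟨x, hx⟩ : I i) ∈ ⊤)

variable [FiniteDimensional k L]

theorem lie_mem_range_ad (hL : IsClassicalSemisimple k L) (D E : LieDerivation k L L) :
    ⁅D, E⁆ ∈ (LieDerivation.ad k L).range := by
  obtain ⟨ι, _, I, hI, hind, htop⟩ := hL
  refine coe_mem_range_ad_iff.1 (mem_range_ad_of_forall hind htop fun i => ?_)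
  obtain ⟨H, _⟩ := (hI i).2.exists_isClassicalCartan
  have hinv (D : LieDerivation k L L) : ∀ x ∈ I i, D x ∈ I i :=
    apply_mem_of_perfect D (hI i).2.2.1
  obtain ⟨m, hm⟩ := coe_mem_range_ad_iff.2 (lie_mem_range_ad_of_isClassicalCartan H
    (restrictDer D (I i) (hinv D)) (restrictDer E (I i) (hinv E)))
  exact ⟨m, fun y => congrArg Subtype.val (LinearMap.congr_fun hm y)⟩

theorem ad_pow_char_mem_range [CharP k p] (hp : p.Prime) (hL : IsClassicalSemisimple k L)
    (x : L) : LieAlgebra.ad k L x ^ p ∈ (LieAlgebra.ad k L).range := by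
  obtain ⟨ι, _, I, hI, hind, htop⟩ := hL
  refine mem_range_ad_of_forall hind htop fun i => ?_
  obtain ⟨H, _⟩ := (hI i).2.exists_isClassicalCartan
  obtain ⟨z, rfl⟩ := exists_sum_of_iSup_eq_top htop x
  have hinv (y : L) (hy : y ∈ I i) : LieAlgebra.ad k L (∑ j, (z j : L)) y ∈ I i :=
    lie_mem_right k L (I i) _ y hy
  have hrestrict : LieAlgebra.ad k (I i) (z i) = LinearMap.restrict _ hinv :=
    LinearMap.ext fun y => Subtype.ext (sum_lie_of_iSupIndep hind z y).symm
  obtain ⟨m, hm⟩ := ElemAb.ad_pow_char_mem_range hp H (z i)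
  rw [hrestrict, Module.End.pow_restrict] at hm
  exact ⟨m, fun y => congrArg Subtype.val (LinearMap.congr_fun hm y)⟩

theorem mem_range_ad_of_pow_char_eq_zero [CharP k p] (hp : p.Prime)
    (hL : IsClassicalSemisimple k L) {D : LieDerivation k L L}
    (hD : (D : Module.End k L) ^ p = 0) : (D : Module.End k L) ∈ (LieAlgebra.ad k L).range := by
  obtain ⟨ι, _, I, hI, hind, htop⟩ := hL
  refine mem_range_ad_of_forall hind htop fun i => ?_
  obtain ⟨H, _⟩ := (hI i).2.exists_isClassicalCartan
  have hinv : ∀ x ∈ I i, D x ∈ I i := apply_mem_of_perfect D (hI i).2.2.1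
  have hzero : (restrictDer D (I i) hinv : Module.End k (I i)) ^ p = 0 := by
    change LinearMap.restrict (D : Module.End k L) hinv ^ p = 0
    rw [Module.End.pow_restrict]
    exact LinearMap.ext fun y => Subtype.ext (LinearMap.congr_fun hD y)
  obtain ⟨m, hm⟩ := ElemAb.mem_range_ad_of_pow_char_eq_zero hp H hzero
  exact ⟨m, fun y => congrArg Subtype.val (LinearMap.congr_fun hm y)⟩

end IsClassicalSemisimple

end ClassicalSemisimple

section LieEquivTransport

variable {R M N : Type*} [CommRing R] [LieRing M] [LieAlgebra R M] [LieRing N] [LieAlgebra R N]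

theorem center_eq_bot_of_equiv (e : M ≃ₗ⁅R⁆ N) (h : LieAlgebra.center R M = ⊥) :
    LieAlgebra.center R N = ⊥ := by
  refine (LieSubmodule.eq_bot_iff _).2 fun y hy => e.symm.injective ?_
  rw [map_zero, ← LieSubmodule.mem_bot (R := R) (L := M), ← h]
  intro x
  rw [← e.symm_apply_apply x]
  exact (e.symm.map_lie (e x) y).symm.trans ((congrArg e.symm (hy (e x))).trans (map_zero _))

theorem lie_top_top_of_surjective {f : M →ₗ⁅R⁆ N} (hf : Function.Surjective f)
    (h : ⁅(⊤ : LieIdeal R M), (⊤ : LieIdeal R M)⁆ = ⊤) :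
    ⁅(⊤ : LieIdeal R N), (⊤ : LieIdeal R N)⁆ = ⊤ := by
  rw [← f.idealRange_eq_top_of_surjective hf, f.idealRange_eq_map, ← LieIdeal.map_bracket_eq f hf,
    h]

theorem isCartanSubalgebra_map (e : M ≃ₗ⁅R⁆ N) (H : LieSubalgebra R M) [hH : H.IsCartanSubalgebra]
    [IsLieAbelian H] : (H.map e.toLieHom).IsCartanSubalgebra := by
  have : IsLieAbelian (H.map e.toLieHom) :=
    (lie_abelian_iff_equiv_lie_abelian (e.lieSubalgebraMap H)).1 inferInstance
  refine ⟨inferInstance, le_antisymm (fun y hy => ?_) (LieSubalgebra.le_normalizer _)⟩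
  obtain ⟨x, rfl⟩ := e.surjective y
  refine ⟨x, ?_, rfl⟩
  change x ∈ H
  rw [← hH.self_normalizing, LieSubalgebra.mem_normalizer_iff]
  intro z hz
  obtain ⟨w, hw, hwz⟩ := (LieSubalgebra.mem_normalizer_iff _ _).1 hy (e z) ⟨z, hz, rfl⟩
  rwa [← e.injective (hwz.trans (e.map_lie x z).symm)]

/-- The lattice isomorphism between the ideals of isomorphic Lie algebras. -/
def idealOrderIso (e : M ≃ₗ⁅R⁆ N) : LieIdeal R M ≃o LieIdeal R N where
  toFun I := I.comap e.symm.toLieHom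
  invFun J := J.comap e.toLieHom
  left_inv I := by ext x; simp
  right_inv J := by ext x; simp
  map_rel_iff' {I J} := by
    refine ⟨fun h x hx => ?_, fun h x hx => h hx⟩
    rw [← e.symm_apply_apply x] at hx ⊢
    exact h hx

/-- An isomorphism of Lie algebras restricts to corresponding ideals. -/
def idealEquiv (e : M ≃ₗ⁅R⁆ N) (I : LieIdeal R M) : I ≃ₗ⁅R⁆ idealOrderIso e I where
  toFun x := ⟨e x, show e.symm (e x) ∈ I from (e.symm_apply_apply (x : M)).symm ▸ x.2⟩
  invFun y := ⟨e.symm y, y.2⟩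
  map_add' a b := Subtype.ext (map_add e (a : M) b)
  map_smul' c a := Subtype.ext (map_smul e c (a : M))
  map_lie' {a b} := Subtype.ext (LieEquiv.map_lie e (a : M) b)
  left_inv a := Subtype.ext (e.symm_apply_apply a)
  right_inv a := Subtype.ext (e.apply_symm_apply a)

theorem isSimple_of_equiv (e : M ≃ₗ⁅R⁆ N) (h : LieAlgebra.IsSimple R M) :
    LieAlgebra.IsSimple R N where
  eq_bot_or_eq_top J := (h.eq_bot_or_eq_top ((idealOrderIso e).symm J)).imp
    (map_eq_bot_iff _).1 (map_eq_top_iff _).1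
  non_abelian hN := h.non_abelian ((lie_abelian_iff_equiv_lie_abelian e).2 hN)

end LieEquivTransport

section ClassicalTransport

variable {k M N : Type} [Field k] [LieRing M] [LieAlgebra k M] [LieRing N] [LieAlgebra k N]

theorem rootSp_map (e : M ≃ₗ⁅k⁆ N) (H : LieSubalgebra k M)
    (α : Module.Dual k (H.map e.toLieHom)) :
    rootSp k N (H.map e.toLieHom) α =
      (rootSp k M H ((e.lieSubalgebraMap H).toLinearEquiv.dualMap α)).map
        (e.toLinearEquiv : M →ₗ[k] N) := by
  ext y
  obtain ⟨x, rfl⟩ := e.surjective y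
  refine Iff.trans ?_ (e.injective.mem_set_image (s := rootSp k M H _)).symm
  refine (e.lieSubalgebraMap H).surjective.forall.trans (forall_congr' fun h => ?_)
  change ⁅e h, e x⁆ = α (e.lieSubalgebraMap H h) • e x ↔ ⁅(h : M), x⁆ = α _ • x
  rw [← LieEquiv.map_lie, ← map_smul, EmbeddingLike.apply_eq_iff_eq]
  rfl

theorem span_lie_rootSp_map (e : M ≃ₗ⁅k⁆ N) (H : LieSubalgebra k M)
    (α : Module.Dual k (H.map e.toLieHom)) :
    Submodule.span k {z : N | ∃ x ∈ rootSp k N (H.map e.toLieHom) α,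
      ∃ y ∈ rootSp k N (H.map e.toLieHom) (-α), ⁅x, y⁆ = z} =
    (Submodule.span k {z : M | ∃ x ∈ rootSp k M H ((e.lieSubalgebraMap H).toLinearEquiv.dualMap α),
      ∃ y ∈ rootSp k M H (-(e.lieSubalgebraMap H).toLinearEquiv.dualMap α), ⁅x, y⁆ = z}).map
        (e.toLinearEquiv : M →ₗ[k] N) := by
  rw [Submodule.map_span]
  congr 1
  ext z
  simp only [rootSp_map, map_neg]
  constructor
  · rintro ⟨_, ⟨x, hx, rfl⟩, _, ⟨y, hy, rfl⟩, rfl⟩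
    exact ⟨⁅x, y⁆, ⟨x, hx, y, hy, rfl⟩, e.map_lie x y⟩
  · rintro ⟨_, ⟨x, hx, y, hy, rfl⟩, rfl⟩
    exact ⟨e x, ⟨x, hx, rfl⟩, e y, ⟨y, hy, rfl⟩, (e.map_lie x y).symm⟩

theorem IsClassicalLie.of_equiv (e : M ≃ₗ⁅k⁆ N) (hM : IsClassicalLie k M) :
    IsClassicalLie k N := by
  obtain ⟨hcenter, hperfect, H, hcartan, hab, hsup, hroot, hcoroot, hstring⟩ := hM
  let d := (e.lieSubalgebraMap H).toLinearEquiv.dualMap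
  have hne {α} (hα : α ≠ 0) : d α ≠ 0 := d.map_ne_zero_iff.2 hα
  have hbot {α} : rootSp k N (H.map e.toLieHom) α = ⊥ ↔ rootSp k M H (d α) = ⊥ := by
    rw [rootSp_map, Submodule.map_eq_bot_iff]
  refine ⟨center_eq_bot_of_equiv e hcenter, lie_top_top_of_surjective e.surjective hperfect,
    H.map e.toLieHom, isCartanSubalgebra_map e H,
    (lie_abelian_iff_equiv_lie_abelian (e.lieSubalgebraMap H)).1 hab, ?_, fun α h0 hα => ?_,
    fun α h0 hα => ?_, fun α h0 hα β hβ => ?_⟩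
  · simp_rw [rootSp_map]
    rw [← Submodule.map_iSup, d.surjective.iSup_comp (g := fun α => rootSp k M H α), hsup,
      Submodule.map_top, LinearEquiv.range]
  · rw [rootSp_map, LinearEquiv.finrank_map_eq]
    exact hroot _ (hne h0) (hbot.not.1 hα)
  · rw [span_lie_rootSp_map, LinearEquiv.finrank_map_eq]
    exact hcoroot _ (hne h0) (hbot.not.1 hα)
  · obtain ⟨n, hn⟩ := hstring _ (hne h0) (hbot.not.1 hα) _ (hbot.not.1 hβ)
    exact ⟨n, hbot.2 (by rwa [map_add, map_nsmul])⟩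

theorem IsClassicalSemisimple.of_equiv (e : M ≃ₗ⁅k⁆ N) (hM : IsClassicalSemisimple k M) :
    IsClassicalSemisimple k N := by
  obtain ⟨ι, hι, I, hI, hind, htop⟩ := hM
  refine ⟨ι, hι, fun i => idealOrderIso e (I i), fun i =>
    ⟨isSimple_of_equiv (idealEquiv e (I i)) (hI i).1, (hI i).2.of_equiv (idealEquiv e (I i))⟩,
    hind.map_orderIso _, ?_⟩
  rw [← OrderIso.map_iSup, htop, map_top]

end ClassicalTransport

section DerivedSubalgebra

variable {R L M : Type*} [CommRing R] [LieRing L] [LieAlgebra R L] [LieRing M] [LieAlgebra R M]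
  {φ : L →ₗ⁅R⁆ LieDerivation R M M}

theorem map_ad_pow_of_map_eq_ad {x y : L} {m : M} (hy : φ y = LieDerivation.ad R M m) (n : ℕ) :
    φ ((LieAlgebra.ad R L x ^ n) y) =
      LieDerivation.ad R M (((φ x : Module.End R M) ^ n) m) := by
  induction n with
  | zero => simpa using hy
  | succ n ih =>
    rw [pow_succ', pow_succ', Module.End.mul_apply, Module.End.mul_apply, LieAlgebra.ad_apply,
      LieHom.map_lie, ih, LieDerivation.lie_der_ad_eq_ad_der, LieDerivation.coeFn_coe]

theorem mem_derived_iff (hperfect : ⁅(⊤ : LieIdeal R M), (⊤ : LieIdeal R M)⁆ = ⊤)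
    (hlie : ∀ D E : LieDerivation R M M, ⁅D, E⁆ ∈ (LieDerivation.ad R M).range)
    (hinj : Function.Injective φ) (hφ : ∀ m : M, LieDerivation.ad R M m ∈ Set.range φ) {x : L} :
    x ∈ ⁅(⊤ : LieIdeal R L), (⊤ : LieIdeal R L)⁆ ↔ φ x ∈ (LieDerivation.ad R M).range := by
  constructor
  · suffices ⁅(⊤ : LieIdeal R L), (⊤ : LieIdeal R L)⁆.toSubmodule ≤
        (LieDerivation.ad R M).range.toSubmodule.comap (φ : L →ₗ[R] LieDerivation R M M) from
      fun hx => this hx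
    rw [LieSubmodule.lieIdeal_oper_eq_linear_span', Submodule.span_le]
    rintro _ ⟨y, -, z, -, rfl⟩
    change φ ⁅y, z⁆ ∈ (LieDerivation.ad R M).range
    exact φ.map_lie y z ▸ hlie (φ y) (φ z)
  · rintro ⟨m, hm⟩
    have hle : (⊤ : Submodule R M) ≤
        (⁅(⊤ : LieIdeal R L), (⊤ : LieIdeal R L)⁆.toSubmodule.map
          (φ : L →ₗ[R] LieDerivation R M M)).comap
            (LieDerivation.ad R M : M →ₗ[R] LieDerivation R M M) := by
      rw [← span_lie_eq_top hperfect, Submodule.span_le]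
      rintro _ ⟨a, b, rfl⟩
      obtain ⟨y, hy⟩ := hφ a
      obtain ⟨z, hz⟩ := hφ b
      refine ⟨⁅y, z⁆,
        LieSubmodule.lie_mem_lie (LieSubmodule.mem_top y) (LieSubmodule.mem_top z), ?_⟩
      change φ ⁅y, z⁆ = LieDerivation.ad R M ⁅a, b⁆
      rw [LieHom.map_lie, LieHom.map_lie, hy, hz]
    obtain ⟨y, hy, hyx⟩ := hle (Submodule.mem_top : m ∈ ⊤)
    rwa [← hinj (hyx.trans hm)]

theorem nonempty_equiv_derived (hcenter : LieAlgebra.center R M = ⊥)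
    (hperfect : ⁅(⊤ : LieIdeal R M), (⊤ : LieIdeal R M)⁆ = ⊤)
    (hlie : ∀ D E : LieDerivation R M M, ⁅D, E⁆ ∈ (LieDerivation.ad R M).range)
    (hinj : Function.Injective φ) (hφ : ∀ m : M, LieDerivation.ad R M m ∈ Set.range φ) :
    Nonempty (M ≃ₗ⁅R⁆ ↥⁅(⊤ : LieIdeal R L), (⊤ : LieIdeal R L)⁆) := by
  let ψ := φ.comp ⁅(⊤ : LieIdeal R L), (⊤ : LieIdeal R L)⁆.incl
  have hrange : (LieDerivation.ad R M).range = ψ.range := by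
    ext D
    constructor
    · rintro ⟨m, rfl⟩
      obtain ⟨x, hx⟩ := hφ m
      exact ⟨⟨x, (mem_derived_iff hperfect hlie hinj hφ).2 ⟨m, hx.symm⟩⟩, hx⟩
    · rintro ⟨x, rfl⟩
      exact (mem_derived_iff hperfect hlie hinj hφ).1 x.2
  have had := LieDerivation.injective_ad_of_center_eq_bot hcenter
  have hψ : Function.Injective ψ := hinj.comp Subtype.val_injective
  exact ⟨((LieEquiv.ofInjective _ had).trans (LieEquiv.ofEq _ _ (congrArg _ hrange))).trans
    (LieEquiv.ofInjective ψ hψ).symm⟩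

end DerivedSubalgebra

section AlmostClassicalSemisimple

variable {p : ℕ} {k L : Type} [Field k] [LieRing L] [LieAlgebra k L]

theorem pStructure.map_pmap {M : Type*} [LieRing M] [LieAlgebra k M]
    {φ : L →ₗ⁅k⁆ LieDerivation k M M} (P : pStructure p k L)
    (hcenter : LieAlgebra.center k M = ⊥)
    (hφ : ∀ m : M, LieDerivation.ad k M m ∈ Set.range φ) (x : L) :
    (φ (P.pmap x) : Module.End k M) = (φ x : Module.End k M) ^ p := by
  ext m
  obtain ⟨y, hy⟩ := hφ m
  refine LieDerivation.injective_ad_of_center_eq_bot hcenter ?_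
  rw [← map_ad_pow_of_map_eq_ad hy, ← P.ad_pmap, LieHom.map_lie, hy,
    LieDerivation.lie_der_ad_eq_ad_der, LieDerivation.coeFn_coe]

theorem _root_.statement11_general [CharP k p] (hp : p.Prime) (P : pStructure p k L)
    (hacs : IsAlmostClassicalSemisimple k L) :
    (∀ x ∈ ⁅(⊤ : LieIdeal k L), (⊤ : LieIdeal k L)⁆,
      P.pmap x ∈ ⁅(⊤ : LieIdeal k L), (⊤ : LieIdeal k L)⁆) ∧
    IsClassicalSemisimple k ↥⁅(⊤ : LieIdeal k L), (⊤ : LieIdeal k L)⁆ ∧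
    P.null = {x : L | x ∈ ⁅(⊤ : LieIdeal k L), (⊤ : LieIdeal k L)⁆ ∧ P.pmap x = 0} := by
  obtain ⟨M, _, _, _, hM, φ, hinj, hφ⟩ := hacs
  have hlie := hM.lie_mem_range_ad
  obtain ⟨e⟩ := nonempty_equiv_derived hM.center_eq_bot hM.lie_top_top hlie hinj hφ
  have hmem {x : L} : x ∈ ⁅(⊤ : LieIdeal k L), (⊤ : LieIdeal k L)⁆ ↔
      (φ x : Module.End k M) ∈ (LieAlgebra.ad k M).range :=
    (mem_derived_iff hM.lie_top_top hlie hinj hφ).trans coe_mem_range_ad_iff.symm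
  have hpmap := P.map_pmap hM.center_eq_bot hφ
  refine ⟨fun x hx => ?_, hM.of_equiv e, Set.ext fun x => ⟨fun hx => ⟨?_, hx⟩, And.right⟩⟩
  · obtain ⟨m, hm⟩ := hmem.1 hx
    rw [hmem, hpmap, ← hm]
    exact hM.ad_pow_char_mem_range hp m
  · refine hmem.2 (hM.mem_range_ad_of_pow_char_eq_zero hp ?_)
    rw [← hpmap, show P.pmap x = 0 from hx, map_zero]
    rfl

end AlmostClassicalSemisimple

end ElemAb

/-- If `(g,[p])` is almost classical semisimple, then `[g,g]` is a
classical semisimple `p`-ideal of `g` and `V([g,g]) = V(g)`. -/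
theorem statement11
    (p : ℕ) (hp : p.Prime) (hp3 : 3 ≤ p)
    (k : Type) [Field k] [IsAlgClosed k] [CharP k p]
    (L : Type) [LieRing L] [LieAlgebra k L] [FiniteDimensional k L]
    (P : pStructure p k L)
    (hacs : IsAlmostClassicalSemisimple k L) :
    (∀ x ∈ ⁅(⊤ : LieIdeal k L), (⊤ : LieIdeal k L)⁆, P.pmap x ∈ ⁅(⊤ : LieIdeal k L), (⊤ : LieIdeal k L)⁆) ∧
    IsClassicalSemisimple k ↥(⁅(⊤ : LieIdeal k L), (⊤ : LieIdeal k L)⁆) ∧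
    P.null = {x : L | x ∈ ⁅(⊤ : LieIdeal k L), (⊤ : LieIdeal k L)⁆ ∧ P.pmap x = 0} :=
  statement11_general hp P hacs
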